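/- (Corollary 1: Stability based on removing a full sample.) Under the structure regularization framework, let f^{∖i} be the minimizer of the objective in which all α mini-sample terms derived from the i-th original sample z_i are removed: f^{∖i} := argmin_{g∈F} [(1/(mn)) Σ_{j∉i} L_τ(g, z′_j) + (λ/2)‖g‖₂²]. Assume each L_τ(·, z′_j) is convex and differentiable, the evaluation is ρ-admissible, the point-wise cost is τ-smooth, and feature values are bounded by v. Then for every sample z = (x, y) of structure complexity n (with feature values bounded by v) and every position k, |f(x, k) − f^{∖i}(x, k)| ≤ dτρ²v²n² / (mλα), i.e., the function stability Δ̄ of f compared with f^{∖i} is bounded by α times the bound dτρ²v²n²/(mλα²) of Theorem 2. -/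

import Mathlib

open scoped BigOperators

/-!
Both objectives are `lam`-strongly convex, so each grows quadratically away from its minimizer.
Adding the growth inequality of one objective at the other's minimizer to its counterpart cancels
everything the two objectives share: `lam * ‖f - fbar‖ ^ 2` is at most the difference of the removed
loss terms at `fbar` and `f`. Those terms are Lipschitz, so one factor `‖f - fbar‖` cancels, and
admissibility turns the resulting bound on `‖f - fbar‖` into a bound on predictions.
-/

open Filter Set
open scoped NNReal Topology

theorem add_le_of_isMinOn_of_uniformConvexOn {E : Type*} [NormedAddCommGroup E] [NormedSpace ℝ E]
    {s : Set E} {φ : ℝ → ℝ} {f : E → ℝ} {x y : E} (hf : UniformConvexOn s φ f)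
    (hmin : IsMinOn f s x) (hx : x ∈ s) (hy : y ∈ s) : f x + φ ‖y - x‖ ≤ f y := by
  have hsegment : ∀ b ∈ Ioo (0 : ℝ) 1, (1 - b) * φ ‖y - x‖ ≤ f y - f x := by
    rintro b ⟨hb0, hb1⟩
    have hb1' : 0 ≤ 1 - b := sub_nonneg.2 hb1.le
    have hmid := hmin (hf.1 hy hx hb0.le hb1' (by ring))
    have hconv := hf.2 hy hx hb0.le hb1' (by ring)
    simp only [smul_eq_mul, mem_ofPred_eq] at hmid hconv
    refine le_of_mul_le_mul_left ?_ hb0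
    linarith
  have hlim : Tendsto (fun b : ℝ => (1 - b) * φ ‖y - x‖) (𝓝[>] 0) (𝓝 (φ ‖y - x‖)) := by
    have hcont : Continuous fun b : ℝ => (1 - b) * φ ‖y - x‖ := by fun_prop
    simpa using (hcont.tendsto 0).mono_left nhdsWithin_le_nhds
  rw [← le_sub_iff_add_le']
  exact le_of_tendsto hlim (eventually_of_mem (Ioo_mem_nhdsGT one_pos) hsegment)

theorem mul_norm_sub_sq_le_of_isMinOn_of_strongConvexOn {E : Type*} [NormedAddCommGroup E]
    [NormedSpace ℝ E] {s : Set E} {μ : ℝ} {Φ Ψ : E → ℝ} {x y : E} (hΦ : StrongConvexOn s μ Φ)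
    (hΨ : StrongConvexOn s μ Ψ) (hx : x ∈ s) (hy : y ∈ s) (hxmin : IsMinOn Φ s x)
    (hymin : IsMinOn Ψ s y) : μ * ‖x - y‖ ^ 2 ≤ (Φ y - Ψ y) - (Φ x - Ψ x) := by
  have hgrowthΦ := add_le_of_isMinOn_of_uniformConvexOn hΦ hxmin hx hy
  have hgrowthΨ := add_le_of_isMinOn_of_uniformConvexOn hΨ hymin hy hx
  rw [norm_sub_rev] at hgrowthΦ
  linarith

theorem strongConvexOn_add_half_mul_norm_sq {F : Type*} [NormedAddCommGroup F]
    [InnerProductSpace ℝ F] {s : Set F} {G : F → ℝ} (hG : ConvexOn ℝ s G) (μ : ℝ) :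
    StrongConvexOn s μ fun g => G g + μ / 2 * ‖g‖ ^ 2 :=
  strongConvexOn_iff_convex.2 (by simpa only [add_sub_cancel_right] using hG)

section RegularizedRisk

variable {F P : Type*} [NormedAddCommGroup F]

/-- The regularized empirical risk `c * ∑ p ∈ s, ℓ p g + (lam / 2) * ‖g‖ ^ 2` of `g` over the finite
set `s` of samples, where `ℓ p` is the loss on the sample `p`. The weight `c` is a parameter, as the
objectives with and without the removed samples share the same normalization. -/
noncomputable def regularizedRisk (c lam : ℝ) (ℓ : P → F → ℝ) (s : Finset P) (g : F) : ℝ :=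
  c * ∑ p ∈ s, ℓ p g + lam / 2 * ‖g‖ ^ 2

variable {c lam : ℝ} {ℓ : P → F → ℝ} {s t : Finset P}

theorem regularizedRisk_sub_of_subset [DecidableEq P] (hts : t ⊆ s) (g : F) :
    regularizedRisk c lam ℓ s g - regularizedRisk c lam ℓ t g = c * ∑ p ∈ s \ t, ℓ p g := by
  rw [regularizedRisk, regularizedRisk, ← Finset.sum_sdiff hts]
  ring

variable [InnerProductSpace ℝ F]

theorem strongConvexOn_regularizedRisk (hc : 0 ≤ c) (hconv : ∀ p ∈ s, ConvexOn ℝ univ (ℓ p)) :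
    StrongConvexOn univ lam (regularizedRisk c lam ℓ s) := by
  have hsum : ConvexOn ℝ univ fun g => ∑ p ∈ s, ℓ p g := by
    refine ⟨convex_univ, fun g _ h _ a b ha hb hab => ?_⟩
    simp only [smul_eq_mul, Finset.mul_sum, ← Finset.sum_add_distrib]
    exact Finset.sum_le_sum fun p hp => (hconv p hp).2 (mem_univ g) (mem_univ h) ha hb hab
  exact strongConvexOn_add_half_mul_norm_sq (hsum.smul hc) lam

theorem norm_sub_le_of_isMinOn_regularizedRisk [DecidableEq P] {K : ℝ≥0} {f g : F} (hc : 0 ≤ c)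
    (hlam : 0 < lam) (hts : t ⊆ s) (hconv : ∀ p ∈ s, ConvexOn ℝ univ (ℓ p))
    (hlip : ∀ p ∈ s \ t, LipschitzWith K (ℓ p))
    (hf : IsMinOn (regularizedRisk c lam ℓ s) univ f)
    (hg : IsMinOn (regularizedRisk c lam ℓ t) univ g) :
    ‖f - g‖ ≤ c * ((s \ t).card * K) / lam := by
  have hremoved : ∑ p ∈ s \ t, ℓ p g - ∑ p ∈ s \ t, ℓ p f ≤ (s \ t).card * (K * ‖f - g‖) := by
    rw [← Finset.sum_sub_distrib, ← nsmul_eq_mul]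
    refine Finset.sum_le_card_nsmul _ _ _ fun p hp => ?_
    rw [← dist_eq_norm, dist_comm]
    exact sub_le_iff_le_add'.2 ((hlip p hp).le_add_mul g f)
  have hsq : lam * ‖f - g‖ ^ 2 ≤ c * ((s \ t).card * K) * ‖f - g‖ := by
    have hstrong := mul_norm_sub_sq_le_of_isMinOn_of_strongConvexOn
      (strongConvexOn_regularizedRisk hc hconv)
      (strongConvexOn_regularizedRisk hc fun p hp => hconv p (hts hp))
      (mem_univ f) (mem_univ g) hf hg
    rw [regularizedRisk_sub_of_subset hts, regularizedRisk_sub_of_subset hts] at hstrong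
    have := mul_le_mul_of_nonneg_left hremoved hc
    linarith
  rw [le_div_iff₀ hlam]
  rcases (norm_nonneg (f - g)).eq_or_lt with hzero | hpos
  · rw [← hzero, zero_mul]
    positivity
  · refine le_of_mul_le_mul_right ?_ hpos
    linarith

end RegularizedRisk

/-- The sample-wise loss of the hypothesis `g` on a sample with positions `ι` and tags `y`: the sum
over the positions of the point-wise cost `c` of the prediction. The input enters only through
`predict`, which lists the predictions of each hypothesis on it. -/
def sampleLoss {F ι V Y : Type*} [Fintype ι] (c : V → Y → ℝ) (predict : F → ι → V) (y : ι → Y)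
    (g : F) : ℝ :=
  ∑ k, c (predict g k) (y k)

theorem lipschitzWith_sampleLoss {F ι V Y : Type*} [PseudoMetricSpace F] [Fintype ι]
    [PseudoMetricSpace V] {c : V → Y → ℝ} {predict : F → ι → V} {y : ι → Y} {τ K : ℝ≥0}
    (hc : ∀ k, LipschitzWith τ fun u => c u (y k))
    (hpredict : ∀ k, LipschitzWith K fun g => predict g k) :
    LipschitzWith (Fintype.card ι * (τ * K)) (sampleLoss c predict y) := by
  refine LipschitzWith.of_dist_le_mul fun g h => ?_
  calc dist (sampleLoss c predict y g) (sampleLoss c predict y h)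
      ≤ ∑ _k : ι, (τ * K : ℝ≥0) * dist g h :=
        dist_sum_sum_le_of_le _ fun k _ => ((hc k).comp (hpredict k)).dist_le_mul g h
    _ = (Fintype.card ι * (τ * K) : ℝ≥0) * dist g h := by
        simp only [Finset.sum_const, Finset.card_univ, nsmul_eq_mul]
        push_cast
        ring

/-- An evaluation, sending a hypothesis `g`, an input sequence of any length `t` and a position to a
prediction, is `ρ`-admissible if at every position it is Lipschitz in `g`, with constant `ρ` times
the norm of the sum of the feature vectors of the input. -/
def IsAdmissible {F E : Type*} [SeminormedAddCommGroup F] [SeminormedAddCommGroup E]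
    (eval : F → (t : ℕ) → (Fin t → E) → Fin t → ℝ) (ρ : ℝ) : Prop :=
  ∀ (g g' : F) (t : ℕ) (x : Fin t → E) (k : Fin t),
    |eval g t x k - eval g' t x k| ≤ ρ * ‖g - g'‖ * ‖∑ k', x k'‖

theorem IsAdmissible.lipschitzWith {F E : Type*} [SeminormedAddCommGroup F]
    [SeminormedAddCommGroup E] {eval : F → (t : ℕ) → (Fin t → E) → Fin t → ℝ} {ρ R : ℝ≥0}
    (h : IsAdmissible eval ρ) {t : ℕ} {x : Fin t → E} (hx : ∀ k, ‖x k‖ ≤ R) (k : Fin t) :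
    LipschitzWith (ρ * (t * R)) fun g => eval g t x k := by
  have hsum : ‖∑ k', x k'‖ ≤ t * R := by
    simpa using norm_sum_le_of_le Finset.univ fun k' _ => hx k'
  refine LipschitzWith.of_dist_le_mul fun g g' => ?_
  calc dist (eval g t x k) (eval g' t x k) ≤ ρ * ‖g - g'‖ * ‖∑ k', x k'‖ := h g g' t x k
    _ ≤ ρ * ‖g - g'‖ * (t * R) := by gcongr
    _ = (ρ * (t * R) : ℝ≥0) * dist g g' := by
        rw [dist_eq_norm]
        push_cast
        ring

theorem norm_le_sqrt_card_mul_of_forall_norm_le {𝕜 ι : Type*} [RCLike 𝕜] [Fintype ι] {v : ℝ}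
    {x : EuclideanSpace 𝕜 ι} (hx : ∀ q, ‖x q‖ ≤ v) : ‖x‖ ≤ √(Fintype.card ι) * v := by
  rcases isEmpty_or_nonempty ι with _ | ⟨⟨q₀⟩⟩
  · simp [EuclideanSpace.norm_eq]
  have hv : 0 ≤ v := (norm_nonneg _).trans (hx q₀)
  rw [EuclideanSpace.norm_eq, ← Real.sqrt_sq hv, ← Real.sqrt_mul (Nat.cast_nonneg _)]
  refine Real.sqrt_le_sqrt ?_
  simpa using Finset.sum_le_card_nsmul Finset.univ (fun q => ‖x q‖ ^ 2) (v ^ 2)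
    fun q _ => pow_le_pow_left₀ (norm_nonneg _) (hx q) 2

theorem card_univ_sdiff_filter_fst_ne {ι κ : Type*} [Fintype ι] [Fintype κ] [DecidableEq ι]
    [DecidableEq κ] (i : ι) :
    (Finset.univ \ Finset.univ.filter fun p : ι × κ => p.1 ≠ i).card = Fintype.card κ := by
  have hrow : (Finset.univ \ Finset.univ.filter fun p : ι × κ => p.1 ≠ i) =
      {i} ×ˢ (Finset.univ : Finset κ) := by
    ext ⟨j, a⟩
    simp [eq_comm]
  rw [hrow, Finset.card_product, Finset.card_singleton, one_mul, Finset.card_univ]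

theorem function_stability_full_sample_removal_general
    {F E Y : Type*} [NormedAddCommGroup F] [InnerProductSpace ℝ F] [SeminormedAddCommGroup E]
    {m α n n' : ℕ} (hdiv : n = α * n')
    {eval : F → (t : ℕ) → (Fin t → E) → Fin t → ℝ} {ρ : ℝ} (hρ : 0 ≤ ρ)
    (hadm : IsAdmissible eval ρ)
    {cτ : ℝ → Y → ℝ} {τ : ℝ}
    (hsmooth : ∀ y₁ y₂ ystar, |cτ y₁ ystar - cτ y₂ ystar| ≤ τ * |y₁ - y₂|)
    {R : ℝ} {x' : Fin m × Fin α → Fin n' → E} {y' : Fin m × Fin α → Fin n' → Y}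
    (hx' : ∀ p k, ‖x' p k‖ ≤ R)
    (hconv : ∀ p, ConvexOn ℝ univ (sampleLoss cτ (fun g => eval g n' (x' p)) (y' p)))
    {lam : ℝ} (hlam : 0 < lam) {f fbar : F} {i : Fin m}
    (hf : IsMinOn (regularizedRisk (1 / ((m : ℝ) * n)) lam
      (fun p => sampleLoss cτ (fun g => eval g n' (x' p)) (y' p)) Finset.univ) univ f)
    (hfbar : IsMinOn (regularizedRisk (1 / ((m : ℝ) * n)) lam
      (fun p => sampleLoss cτ (fun g => eval g n' (x' p)) (y' p))
      (Finset.univ.filter fun p => p.1 ≠ i)) univ fbar)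
    {x : Fin n → E} (hx : ∀ k, ‖x k‖ ≤ R) (k : Fin n) :
    |eval f n x k - eval fbar n x k| ≤ τ * ρ ^ 2 * R ^ 2 * (n : ℝ) ^ 2 / (m * lam * α) := by
  obtain ⟨hα, hn'⟩ := CanonicallyOrderedAdd.mul_pos.1 (hdiv ▸ k.pos)
  have hm := i.pos
  have hτ : 0 ≤ τ := by
    simpa using (abs_nonneg _).trans (hsmooth 1 0 (y' (i, ⟨0, hα⟩) ⟨0, hn'⟩))
  lift ρ to ℝ≥0 using hρ
  lift τ to ℝ≥0 using hτ
  lift R to ℝ≥0 using (norm_nonneg _).trans (hx k)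
  have hloss (p : Fin m × Fin α) : LipschitzWith (n' * (τ * (ρ * (n' * R))))
      (sampleLoss cτ (fun g => eval g n' (x' p)) (y' p)) := by
    simpa only [Fintype.card_fin] using lipschitzWith_sampleLoss
      (fun j => LipschitzWith.of_dist_le_mul fun y₁ y₂ => hsmooth y₁ y₂ (y' p j))
      (hadm.lipschitzWith (hx' p))
  have hdist : ‖f - fbar‖ ≤ 1 / (m * n) * (α * (n' * (τ * (ρ * (n' * R))) : ℝ≥0)) / lam := by
    simpa only [card_univ_sdiff_filter_fst_ne, Fintype.card_fin] using
      norm_sub_le_of_isMinOn_regularizedRisk (by positivity) hlam (Finset.subset_univ _)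
        (fun p _ => hconv p) (fun p _ => hloss p) hf hfbar
  have hn : (n : ℝ) = α * n' := mod_cast hdiv
  calc |eval f n x k - eval fbar n x k|
      ≤ (ρ * (n * R) : ℝ≥0) * ‖f - fbar‖ := by
        rw [← dist_eq_norm]
        exact (hadm.lipschitzWith hx k).dist_le_mul f fbar
    _ ≤ (ρ * (n * R) : ℝ≥0) *
          (1 / (m * n) * (α * (n' * (τ * (ρ * (n' * R))) : ℝ≥0)) / lam) := by
        gcongr
    _ = τ * ρ ^ 2 * R ^ 2 * (n : ℝ) ^ 2 / (m * lam * α) := by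
        push_cast
        rw [hn]
        field_simp

/-- **Corollary 1 (Stability based on removing a full sample).**
Under the structure regularization framework, let `fbar` be the minimizer of
the objective in which all `α` mini-sample terms derived from the `i`-th
original sample are removed.  Then for every sample `(x, y)` of structure
complexity `n` with feature values bounded by `v` and every position `k`,
`|f(x,k) - fbar(x,k)| ≤ d * τ * ρ² * v² * n² / (m * lam * α)`, i.e. `α` times
the bound of Theorem 2. -/
theorem function_stability_full_sample_removal
    {F : Type*} [NormedAddCommGroup F] [InnerProductSpace ℝ F]
    (d m α n n' : ℕ) (hm : 0 < m) (hα : 0 < α) (hn : 0 < n)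
    (hdiv : n = α * n')
    (eval : F → (t : ℕ) → (Fin t → EuclideanSpace ℝ (Fin d)) → Fin t → ℝ)
    (ρ : ℝ) (hρ : 0 ≤ ρ)
    (hadm : ∀ (g g' : F) (t : ℕ) (x : Fin t → EuclideanSpace ℝ (Fin d)) (k : Fin t),
      |eval g t x k - eval g' t x k| ≤ ρ * ‖g - g'‖ * ‖∑ k', x k'‖)
    (cτ : ℝ → ℝ → ℝ) (τ : ℝ)
    (hsmooth : ∀ y₁ y₂ ystar : ℝ, |cτ y₁ ystar - cτ y₂ ystar| ≤ τ * |y₁ - y₂|)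
    (hcost_convex : ∀ ystar : ℝ, ConvexOn ℝ Set.univ (fun y : ℝ => cτ y ystar))
    (v : ℝ)
    (x' : Fin m × Fin α → Fin n' → EuclideanSpace ℝ (Fin d))
    (y' : Fin m × Fin α → Fin n' → ℝ)
    (hval : ∀ (p : Fin m × Fin α) (k : Fin n') (q : Fin d), |x' p k q| ≤ v)
    (hconv : ∀ p : Fin m × Fin α,
      ConvexOn ℝ Set.univ (fun g : F => ∑ k, cτ (eval g n' (x' p) k) (y' p k)))
    (hdiff : ∀ p : Fin m × Fin α,
      Differentiable ℝ (fun g : F => ∑ k, cτ (eval g n' (x' p) k) (y' p k)))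
    (lam : ℝ) (hlam : 0 < lam)
    (f : F)
    (hf : ∀ g : F,
      1 / ((m : ℝ) * n) * ∑ p : Fin m × Fin α, ∑ k, cτ (eval f n' (x' p) k) (y' p k)
          + lam / 2 * ‖f‖ ^ 2
        ≤ 1 / ((m : ℝ) * n) * ∑ p : Fin m × Fin α, ∑ k, cτ (eval g n' (x' p) k) (y' p k)
          + lam / 2 * ‖g‖ ^ 2)
    (i : Fin m) (fbar : F)
    (hfbar : ∀ g : F,
      1 / ((m : ℝ) * n) * ∑ p ∈ Finset.univ.filter (fun p : Fin m × Fin α => p.1 ≠ i),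
            ∑ k, cτ (eval fbar n' (x' p) k) (y' p k)
          + lam / 2 * ‖fbar‖ ^ 2
        ≤ 1 / ((m : ℝ) * n) * ∑ p ∈ Finset.univ.filter (fun p : Fin m × Fin α => p.1 ≠ i),
            ∑ k, cτ (eval g n' (x' p) k) (y' p k)
          + lam / 2 * ‖g‖ ^ 2) :
    ∀ (x : Fin n → EuclideanSpace ℝ (Fin d)),
      (∀ (k : Fin n) (q : Fin d), |x k q| ≤ v) →
      ∀ k : Fin n,
        |eval f n x k - eval fbar n x k|
          ≤ (d : ℝ) * τ * ρ ^ 2 * v ^ 2 * (n : ℝ) ^ 2 / ((m : ℝ) * lam * (α : ℝ)) := by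
  intro x hx k
  refine (function_stability_full_sample_removal_general hdiv hρ hadm hsmooth
    (fun p j => norm_le_sqrt_card_mul_of_forall_norm_le (hval p j)) hconv hlam
    (isMinOn_univ_iff.2 hf) (isMinOn_univ_iff.2 hfbar)
    (fun j => norm_le_sqrt_card_mul_of_forall_norm_le (hx j)) k).trans_eq ?_
  rw [mul_pow, Real.sq_sqrt (Nat.cast_nonneg _), Fintype.card_fin]
  ring
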